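/- For all n, m ∈ ℕ with m ≥ 1 and every closed interval I = [b₁,b₂] ⊆ [0,1] with rational endpoints, the set A_{n,m,I} is open in the metric space (F_(C,β), d_α). -/

import Mathlib

open MeasureTheory Set Filter Topology
open scoped ENNReal

noncomputable section

/-- The unit square `M = [0,1]²`. -/
def MSq : Set (ℝ × ℝ) := unitInterval ×ˢ unitInterval

/-- Lower `(C,γ)`-bi-Hölder bound in the second variable. -/
def BiHolderLower (C γ : ℝ) (f : ℝ → ℝ → ℝ) : Prop :=
  ∀ x ∈ unitInterval, ∀ y₁ ∈ unitInterval, ∀ y₂ ∈ unitInterval, y₁ ≠ y₂ →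
    C⁻¹ * |y₂ - y₁| ^ (1 / γ) ≤ |f x y₂ - f x y₁|

/-- Upper `(C,γ)`-Hölder bound in the second variable. -/
def BiHolderUpper (C γ : ℝ) (f : ℝ → ℝ → ℝ) : Prop :=
  ∀ x ∈ unitInterval, ∀ y₁ ∈ unitInterval, ∀ y₂ ∈ unitInterval, y₁ ≠ y₂ →
    |f x y₂ - f x y₁| ≤ C * |y₂ - y₁| ^ γ

/-- Membership in the space `F_(C,γ)`: conditions (i)–(iv); `fx` plays the role of `∂f/∂x`. -/
structure IsFol (C γ : ℝ) (f fx : ℝ → ℝ → ℝ) : Prop where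
  mapsTo : ∀ x ∈ unitInterval, ∀ y ∈ unitInterval, f x y ∈ unitInterval
  hasDeriv : ∀ y ∈ unitInterval, ∀ x ∈ unitInterval,
    HasDerivWithinAt (fun x' => f x' y) (fx x y) unitInterval x
  derivCont : ContinuousOn (fun p : ℝ × ℝ => fx p.1 p.2) MSq
  eq_id : ∀ y ∈ unitInterval, f 0 y = y
  eq_bot : ∀ x ∈ unitInterval, f x 0 = 0
  eq_top : ∀ x ∈ unitInterval, f x 1 = 1
  lower : BiHolderLower C γ f
  upper : BiHolderUpper C γ f

/-- The space `F_(C,γ)`. -/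
structure Fol (C γ : ℝ) where
  f : ℝ → ℝ → ℝ
  fx : ℝ → ℝ → ℝ
  isFol : IsFol C γ f fx

/-- The inverse of `y ↦ f x y` on `[0,1]`, i.e. the holonomy `h^f_{x,0}`. -/
def hinv (f : ℝ → ℝ → ℝ) (x : ℝ) : ℝ → ℝ := Function.invFunOn (f x) unitInterval

/-- The `C⁰` distance over the square. -/
def C0dist (u v : ℝ → ℝ → ℝ) : ℝ :=
  sSup {r | ∃ x ∈ unitInterval, ∃ y ∈ unitInterval, r = |u x y - v x y|}

/-- The `α`-Hölder seminorm of the difference `h - k` on `[0,1]`. -/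
def holDist (α : ℝ) (h k : ℝ → ℝ) : ℝ :=
  sSup {r | ∃ y₁ ∈ unitInterval, ∃ y₂ ∈ unitInterval, y₁ ≠ y₂ ∧
    r = |(h y₂ - k y₂) - (h y₁ - k y₁)| / |y₂ - y₁| ^ α}

/-- The distance `d_α`, on raw data `(f, ∂f/∂x)`, `(g, ∂g/∂x)`. -/
def dalpha (α : ℝ) (f fx g gx : ℝ → ℝ → ℝ) : ℝ :=
  C0dist f g + C0dist fx gx +
    sSup {r | ∃ x ∈ unitInterval,
      r = max (holDist α (f x) (g x)) (holDist α (hinv f x) (hinv g x))}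

/-- The distance `d_α` on `F_(C,γ)`. -/
def dalphaF {C γ : ℝ} (α : ℝ) (F G : Fol C γ) : ℝ := dalpha α F.f F.fx G.f G.fx

/-- Openness with respect to a distance function. -/
def IsOpenWrt {X : Type*} (d : X → X → ℝ) (s : Set X) : Prop :=
  ∀ f ∈ s, ∃ ε > 0, ∀ g, d g f < ε → g ∈ s

/-- Density with respect to a distance function. -/
def IsDenseWrt {X : Type*} (d : X → X → ℝ) (s : Set X) : Prop :=
  ∀ f : X, ∀ ε > 0, ∃ g ∈ s, d g f < ε

/-- Lebesgue measure `μ` on the unit square `M`. -/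
def muM : Measure (ℝ × ℝ) := volume.restrict MSq

/-- The projection `π_f(x,z) = f(x,·)⁻¹(z)` along the leaves. -/
def projF (f : ℝ → ℝ → ℝ) : ℝ × ℝ → ℝ := fun p => hinv f p.1 p.2

/-- The quotient measure `μ̂ = (π_f)_* μ`. -/
def quotM {C γ : ℝ} (F : Fol C γ) : Measure ℝ := muM.map (projF F.f)

/-- The leaf `L_y = {(x, f(x,y)) : x ∈ [0,1]}`. -/
def Leaf {C γ : ℝ} (F : Fol C γ) (y : ℝ) : Set (ℝ × ℝ) :=
  (fun x => (x, F.f x y)) '' unitInterval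

/-- `(ν_y)` is a Rokhlin disintegration of Lebesgue measure on the square w.r.t. `π_f`. -/
def IsDisint {C γ : ℝ} (F : Fol C γ) (ν : ℝ → Measure (ℝ × ℝ)) : Prop :=
  (∀ y, IsProbabilityMeasure (ν y)) ∧
  (∀ E : Set (ℝ × ℝ), MeasurableSet E → Measurable fun y => ν y E) ∧
  (∀ᵐ y ∂quotM F, ν y (Leaf F y) = 1) ∧
  (∀ E : Set (ℝ × ℝ), MeasurableSet E → muM E = ∫⁻ y, ν y E ∂quotM F)

/-- The element `P_i` of the partition `P_{f,n}`. -/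
def Pelt (f : ℝ → ℝ → ℝ) (n i : ℕ) : Set (ℝ × ℝ) :=
  {p | p.1 ∈ unitInterval ∧ f p.1 ((i : ℝ) / 2 ^ n) ≤ p.2 ∧ p.2 < f p.1 (((i : ℝ) + 1) / 2 ^ n)}

/-- `Ĩ = [b₁,b₂] × [0,1]`. -/
def Itilde (b₁ b₂ : ℝ) : Set (ℝ × ℝ) := Icc b₁ b₂ ×ˢ unitInterval

/-- The set `A_{n,m,I}`. -/
def Aset (C γ : ℝ) (n m : ℕ) (b₁ b₂ : ℝ) : Set (Fol C γ) :=
  {F | ∀ i < 2 ^ n,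
    muM (Pelt F.f n i ∩ Itilde b₁ b₂) / muM (Pelt F.f n i) < 1 / (m : ℝ≥0∞) ∨
    1 - 1 / (m : ℝ≥0∞) < muM (Pelt F.f n i ∩ Itilde b₁ b₂) / muM (Pelt F.f n i)}

/-- The set `B_{m,I}`. -/
def Bset (C γ : ℝ) (m : ℕ) (b₁ b₂ : ℝ) : Set (Fol C γ) := ⋃ n : ℕ, Aset C γ n m b₁ b₂

/-- The leaf measure `λ_y`: pushforward of 1-dimensional Lebesgue measure on `[0,1]`
under `x ↦ (x, f(x,y))`. -/
def leafMeas {C γ : ℝ} (F : Fol C γ) (y : ℝ) : Measure (ℝ × ℝ) :=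
  (volume.restrict unitInterval).map fun x => (x, F.f x y)


/-! A `d_α`-small perturbation of `f` moves every leaf uniformly little, so the symmetric difference
of corresponding partition elements lies in thin strips around the two bounding leaves of `f`. Hence
`f ↦ μ(P_i ∩ S)` is continuous for every set `S`. Since `μ(P_i) > 0` (near `x = 0` the bounding
leaves are separated), the ratios `μ(P_i ∩ S) / μ(P_i)` are continuous too, and `A_{n,m,I}` is the
finite intersection over `i` of preimages of the open set `[0, 1/m) ∪ (1 - 1/m, ∞]`. -/

section OpenWrt

variable {X : Type*} {d : X → X → ℝ} {s : Set X}

/-- The filter of neighbourhoods of `f` for the distance function `d`, with `f` as the second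
argument of `d` as in `IsOpenWrt`. It is the filter generated by the balls `{g | d g f < ε}` when
`d` is nonnegative. -/
def nhdsWrt (d : X → X → ℝ) (f : X) : Filter X :=
  comap (fun g => d g f) (𝓝 0)

lemma isOpenWrt_iff_eventually_nhdsWrt (hd : ∀ f g, 0 ≤ d f g) :
    IsOpenWrt d s ↔ ∀ f ∈ s, ∀ᶠ g in nhdsWrt d f, g ∈ s := by
  refine forall₂_congr fun f _ => ?_
  rw [nhdsWrt, (Metric.nhds_basis_ball.comap _).eventually_iff]
  simp only [mem_preimage, Metric.mem_ball, Real.dist_eq, sub_zero, abs_of_nonneg (hd _ _)]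

end OpenWrt

section SymmDiff

variable {X ι : Type*} [MeasurableSpace X] {μ : Measure X} {l : Filter ι}

lemma tendsto_measure_of_tendsto_symmDiff {A : Set X} {B : ι → Set X}
    (h : Tendsto (fun i => μ (symmDiff A (B i))) l (𝓝 0)) :
    Tendsto (fun i => μ (B i)) l (𝓝 (μ A)) := by
  have lower : Tendsto (fun i => μ A - μ (symmDiff A (B i))) l (𝓝 (μ A)) := by
    simpa using ENNReal.Tendsto.sub tendsto_const_nhds h (Or.inr ENNReal.zero_ne_top)
  have upper : Tendsto (fun i => μ A + μ (symmDiff A (B i))) l (𝓝 (μ A)) := by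
    simpa using tendsto_const_nhds.add h
  refine tendsto_of_tendsto_of_tendsto_of_le_of_le lower upper (fun i => ?_) (fun i => ?_)
  · exact tsub_le_iff_tsub_le.1 le_measure_symmDiff
  · rw [symmDiff_comm]
    exact tsub_le_iff_left.1 le_measure_symmDiff

lemma tendsto_measure_inter_of_tendsto_symmDiff {A : Set X} {B : ι → Set X} (S : Set X)
    (h : Tendsto (fun i => μ (symmDiff A (B i))) l (𝓝 0)) :
    Tendsto (fun i => μ (B i ∩ S)) l (𝓝 (μ (A ∩ S))) := by
  refine tendsto_measure_of_tendsto_symmDiff <|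
    tendsto_of_tendsto_of_tendsto_of_le_of_le tendsto_const_nhds h (fun _ => zero_le) fun i => ?_
  rw [← inter_symmDiff_distrib_right]
  exact measure_mono inter_subset_left

end SymmDiff

section RegionIco

variable {X : Type*} {u v u' v' : X → ℝ} {s : Set X} {d : ℝ}

/-- The region over `s` between the graph of `u` (included) and the graph of `v` (excluded), the
shape of the partition elements `P_i`. Mathlib's `regionBetween` excludes both graphs. -/
def regionIco (u v : X → ℝ) (s : Set X) : Set (X × ℝ) :=
  {p | p.1 ∈ s ∧ u p.1 ≤ p.2 ∧ p.2 < v p.1}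

/-- The open strip of vertical half-width `d` around the graph of `u` over `s`; it contains the
points that a vertical perturbation of the graph by less than `d` can move across it. -/
def graphStrip (u : X → ℝ) (d : ℝ) (s : Set X) : Set (X × ℝ) :=
  {p | p.1 ∈ s ∧ |p.2 - u p.1| < d}

lemma graphStrip_eq_regionBetween :
    graphStrip u d s = regionBetween (fun x => u x - d) (fun x => u x + d) s := by
  ext p
  simp only [graphStrip, regionBetween, mem_ofPred_eq, mem_Ioo, abs_lt, neg_lt_sub_iff_lt_add,
    sub_lt_iff_lt_add, add_comm]

lemma symmDiff_regionIco_subset (hu : ∀ x ∈ s, |u x - u' x| < d) (hv : ∀ x ∈ s, |v x - v' x| < d) :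
    symmDiff (regionIco u v s) (regionIco u' v' s) ⊆ graphStrip u d s ∪ graphStrip v d s := by
  have crossing {a a' y : ℝ} (h : |a - a'| < d) (hy : a ≤ y ∧ y < a' ∨ a' ≤ y ∧ y < a) :
      |y - a| < d := by
    rw [abs_lt] at h ⊢
    grind
  rintro ⟨x, y⟩ (⟨⟨hx, huy, hyv⟩, hnot⟩ | ⟨⟨hx, huy, hyv⟩, hnot⟩)
  all_goals
    simp only [regionIco, mem_ofPred_eq, hx, true_and, not_and_or, not_le, not_lt] at hnot huy hyv
    rcases hnot with hnot | hnot
  · exact Or.inl ⟨hx, crossing (hu x hx) (Or.inl ⟨huy, hnot⟩)⟩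
  · exact Or.inr ⟨hx, crossing (hv x hx) (Or.inr ⟨hnot, hyv⟩)⟩
  · exact Or.inl ⟨hx, crossing (hu x hx) (Or.inr ⟨huy, hnot⟩)⟩
  · exact Or.inr ⟨hx, crossing (hv x hx) (Or.inl ⟨hnot, hyv⟩)⟩

variable [MeasurableSpace X] {μ : Measure X}

lemma prod_volume_graphStrip [SFinite μ] (hs : MeasurableSet s)
    (hu : AEMeasurable u (μ.restrict s)) :
    μ.prod volume (graphStrip u d s) = ENNReal.ofReal (2 * d) * μ s := by
  have width (x : X) : ((fun x => u x + d) - fun x => u x - d) x = 2 * d := by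
    simp only [Pi.sub_apply]
    ring
  rw [graphStrip_eq_regionBetween,
    volume_regionBetween_eq_lintegral (hu.sub_const d) (hu.add_const d) hs]
  simp only [width, setLIntegral_const]

lemma tendsto_prod_volume_symmDiff_regionIco [SFinite μ] {ι : Type*} {l : Filter ι}
    {U V : ι → X → ℝ} (hs : MeasurableSet s) (hμs : μ s ≠ ∞)
    (hu : AEMeasurable u (μ.restrict s)) (hv : AEMeasurable v (μ.restrict s))
    (hU : TendstoUniformlyOn U u l s) (hV : TendstoUniformlyOn V v l s) :
    Tendsto (fun i => μ.prod volume (symmDiff (regionIco u v s) (regionIco (U i) (V i) s)))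
      l (𝓝 0) := by
  rw [ENNReal.tendsto_nhds_zero]
  intro ε hε
  have strips_tendsto : Tendsto
      (fun d : ℝ => ENNReal.ofReal (2 * d) * μ s + ENNReal.ofReal (2 * d) * μ s)
      (𝓝[>] 0) (𝓝 0) := by
    have strip : Tendsto (fun d : ℝ => ENNReal.ofReal (2 * d) * μ s) (𝓝[>] 0) (𝓝 0) := by
      have width : Continuous fun d : ℝ => ENNReal.ofReal (2 * d) :=
        ENNReal.continuous_ofReal.comp (continuous_const_mul 2)
      simpa using ENNReal.Tendsto.mul_const (width.continuousWithinAt (s := Ioi 0) (x := 0))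
        (Or.inr hμs)
    simpa using strip.add strip
  obtain ⟨d, hdε, hd⟩ :=
    ((strips_tendsto.eventually_le_const hε).and self_mem_nhdsWithin).exists
  filter_upwards [Metric.tendstoUniformlyOn_iff.1 hU d hd, Metric.tendstoUniformlyOn_iff.1 hV d hd]
    with i hUi hVi
  calc μ.prod volume (symmDiff (regionIco u v s) (regionIco (U i) (V i) s))
      ≤ μ.prod volume (graphStrip u d s ∪ graphStrip v d s) :=
        measure_mono (symmDiff_regionIco_subset hUi hVi)
    _ ≤ μ.prod volume (graphStrip u d s) + μ.prod volume (graphStrip v d s) :=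
        measure_union_le _ _
    _ ≤ ε := by rwa [prod_volume_graphStrip hs hu, prod_volume_graphStrip hs hv]

lemma prod_volume_regionIco_pos [TopologicalSpace X] [μ.IsOpenPosMeasure] {x₀ : X}
    (hx₀ : x₀ ∈ closure (interior s)) (hu : ContinuousWithinAt u s x₀)
    (hv : ContinuousWithinAt v s x₀) (huv : u x₀ < v x₀) :
    0 < μ.prod volume (regionIco u v s) := by
  obtain ⟨p, hup, hpv⟩ := exists_between huv
  obtain ⟨q, hpq, hqv⟩ := exists_between hpv
  obtain ⟨O, hO, hx₀O, hOs⟩ := mem_nhdsWithin.1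
    ((hu.eventually_lt_const hup).and (hv.eventually_const_lt hqv))
  have box_subset : (O ∩ interior s) ×ˢ Ioo p q ⊆ regionIco u v s := by
    rintro ⟨x, y⟩ ⟨⟨hxO, hxs⟩, hpy, hyq⟩
    obtain ⟨hux, hxv⟩ := hOs ⟨hxO, interior_subset hxs⟩
    exact ⟨interior_subset hxs, (hux.trans hpy).le, hyq.trans hxv⟩
  have base_pos : 0 < μ (O ∩ interior s) :=
    (hO.inter isOpen_interior).measure_pos μ (mem_closure_iff.1 hx₀ O hO hx₀O)
  have height_pos : 0 < volume (Ioo p q) := isOpen_Ioo.measure_pos volume (nonempty_Ioo.2 hpq)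
  calc 0 < μ (O ∩ interior s) * volume (Ioo p q) := ENNReal.mul_pos base_pos.ne' height_pos.ne'
    _ = μ.prod volume ((O ∩ interior s) ×ˢ Ioo p q) := (Measure.prod_prod _ _).symm
    _ ≤ μ.prod volume (regionIco u v s) := measure_mono box_subset

end RegionIco

section Distance

variable {u v : ℝ → ℝ → ℝ} {x y : ℝ}

lemma C0dist_nonneg (u v : ℝ → ℝ → ℝ) : 0 ≤ C0dist u v := by
  apply Real.sSup_nonneg
  rintro _ ⟨x, -, y, -, rfl⟩
  exact abs_nonneg _

lemma holDist_nonneg (α : ℝ) (h k : ℝ → ℝ) : 0 ≤ holDist α h k := by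
  apply Real.sSup_nonneg
  rintro _ ⟨y₁, -, y₂, -, -, rfl⟩
  positivity

lemma abs_sub_le_C0dist (hu : ∀ x ∈ unitInterval, ∀ y ∈ unitInterval, u x y ∈ unitInterval)
    (hv : ∀ x ∈ unitInterval, ∀ y ∈ unitInterval, v x y ∈ unitInterval)
    (hx : x ∈ unitInterval) (hy : y ∈ unitInterval) : |u x y - v x y| ≤ C0dist u v := by
  refine le_csSup ⟨1, ?_⟩ ⟨x, hx, y, hy, rfl⟩
  rintro _ ⟨x, hx, y, hy, rfl⟩
  exact Real.dist_le_of_mem_Icc_01 (hu x hx y hy) (hv x hx y hy)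

lemma C0dist_le_dalpha (α : ℝ) (f fx g gx : ℝ → ℝ → ℝ) :
    C0dist f g ≤ dalpha α f fx g gx := by
  have holder_nonneg : 0 ≤ sSup {r | ∃ x ∈ unitInterval,
      r = max (holDist α (f x) (g x)) (holDist α (hinv f x) (hinv g x))} := by
    apply Real.sSup_nonneg
    rintro _ ⟨x, -, rfl⟩
    exact le_max_of_le_left (holDist_nonneg _ _ _)
  rw [dalpha, add_assoc]
  exact le_add_of_nonneg_right (add_nonneg (C0dist_nonneg fx gx) holder_nonneg)

end Distance

lemma Pelt_eq_regionIco (f : ℝ → ℝ → ℝ) (n i : ℕ) :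
    Pelt f n i = regionIco (f · (i / 2 ^ n)) (f · ((i + 1) / 2 ^ n)) unitInterval :=
  rfl

lemma natCast_div_two_pow_mem_unitInterval {i n : ℕ} (h : i ≤ 2 ^ n) :
    (i : ℝ) / 2 ^ n ∈ unitInterval :=
  unitInterval.div_mem (by positivity) (by positivity) (mod_cast h)

instance isFiniteMeasure_muM : IsFiniteMeasure muM :=
  isFiniteMeasure_restrict.2 (isCompact_Icc.prod isCompact_Icc).measure_lt_top.ne

namespace Fol

variable {C γ : ℝ} (α : ℝ) (F G : Fol C γ) {a b y : ℝ}

lemma dalphaF_nonneg : 0 ≤ dalphaF α F G :=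
  (C0dist_nonneg _ _).trans (C0dist_le_dalpha _ _ _ _ _)

lemma continuousOn_leaf (hy : y ∈ unitInterval) : ContinuousOn (F.f · y) unitInterval :=
  fun x hx => (F.isFol.hasDeriv y hy x hx).continuousWithinAt

lemma tendstoUniformlyOn_leaf (hy : y ∈ unitInterval) :
    TendstoUniformlyOn (fun (G : Fol C γ) x => G.f x y) (F.f · y)
      (nhdsWrt (dalphaF α) F) unitInterval := by
  rw [Metric.tendstoUniformlyOn_iff]
  intro ε hε
  have close : ∀ᶠ G in nhdsWrt (dalphaF α) F, dalphaF α G F < ε :=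
    tendsto_comap.eventually_lt_const hε
  filter_upwards [close] with G hG x hx
  calc dist (F.f x y) (G.f x y) = |G.f x y - F.f x y| := by rw [dist_comm, Real.dist_eq]
    _ ≤ C0dist G.f F.f := abs_sub_le_C0dist G.isFol.mapsTo F.isFol.mapsTo hx hy
    _ ≤ dalphaF α G F := C0dist_le_dalpha _ _ _ _ _
    _ < ε := hG

lemma tendsto_muM_regionIco_inter (ha : a ∈ unitInterval) (hb : b ∈ unitInterval)
    (S : Set (ℝ × ℝ)) :
    Tendsto (fun G : Fol C γ => muM (regionIco (G.f · a) (G.f · b) unitInterval ∩ S))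
      (nhdsWrt (dalphaF α) F)
      (𝓝 (muM (regionIco (F.f · a) (F.f · b) unitInterval ∩ S))) := by
  have aemeasurable {y : ℝ} (hy : y ∈ unitInterval) :
      AEMeasurable (F.f · y) (volume.restrict unitInterval) :=
    (F.continuousOn_leaf hy).aemeasurable measurableSet_Icc
  refine tendsto_measure_inter_of_tendsto_symmDiff S <|
    tendsto_of_tendsto_of_tendsto_of_le_of_le tendsto_const_nhds
      (tendsto_prod_volume_symmDiff_regionIco measurableSet_Icc measure_Icc_lt_top.ne
        (aemeasurable ha) (aemeasurable hb)
        (F.tendstoUniformlyOn_leaf α ha) (F.tendstoUniformlyOn_leaf α hb))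
      (fun _ => zero_le) (fun _ => Measure.restrict_apply_le _ _)

lemma regionIco_subset_MSq (ha : a ∈ unitInterval) (hb : b ∈ unitInterval) :
    regionIco (F.f · a) (F.f · b) unitInterval ⊆ MSq := fun p ⟨hx, hap, hpb⟩ =>
  ⟨hx, (F.isFol.mapsTo p.1 hx a ha).1.trans hap, hpb.le.trans (F.isFol.mapsTo p.1 hx b hb).2⟩

lemma muM_regionIco_pos (ha : a ∈ unitInterval) (hb : b ∈ unitInterval) (hab : a < b) :
    0 < muM (regionIco (F.f · a) (F.f · b) unitInterval) := by
  have zero_mem_closure_interior : (0 : ℝ) ∈ closure (interior unitInterval) := by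
    simp [unitInterval, interior_Icc, closure_Ioo]
  rw [muM, Measure.restrict_eq_self _ (F.regionIco_subset_MSq ha hb)]
  refine prod_volume_regionIco_pos zero_mem_closure_interior
    (F.continuousOn_leaf ha 0 unitInterval.zero_mem)
    (F.continuousOn_leaf hb 0 unitInterval.zero_mem) ?_
  rwa [F.isFol.eq_id a ha, F.isFol.eq_id b hb]

lemma tendsto_muM_Pelt_ratio {n i : ℕ} (hi : i < 2 ^ n) (S : Set (ℝ × ℝ)) :
    Tendsto (fun G : Fol C γ => muM (Pelt G.f n i ∩ S) / muM (Pelt G.f n i))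
      (nhdsWrt (dalphaF α) F) (𝓝 (muM (Pelt F.f n i ∩ S) / muM (Pelt F.f n i))) := by
  have ha : (i : ℝ) / 2 ^ n ∈ unitInterval := natCast_div_two_pow_mem_unitInterval hi.le
  have hb : ((i : ℝ) + 1) / 2 ^ n ∈ unitInterval :=
    mod_cast natCast_div_two_pow_mem_unitInterval (Nat.succ_le_of_lt hi)
  have hab : (i : ℝ) / 2 ^ n < ((i : ℝ) + 1) / 2 ^ n := by
    gcongr
    exact lt_add_one _
  have numerator := F.tendsto_muM_regionIco_inter α ha hb S
  have denominator := F.tendsto_muM_regionIco_inter α ha hb univ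
  simp only [inter_univ] at denominator
  simp only [Pelt_eq_regionIco]
  exact ENNReal.Tendsto.div numerator (Or.inr (F.muM_regionIco_pos ha hb hab).ne')
    denominator (Or.inr (measure_ne_top _ _))

end Fol

theorem stmt9_general (C γ α : ℝ) (n : ℕ) (S : Set (ℝ × ℝ)) {U : Set ℝ≥0∞} (hU : IsOpen U) :
    IsOpenWrt (dalphaF α)
      {F : Fol C γ | ∀ i < 2 ^ n, muM (Pelt F.f n i ∩ S) / muM (Pelt F.f n i) ∈ U} := by
  rw [isOpenWrt_iff_eventually_nhdsWrt (Fol.dalphaF_nonneg α)]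
  intro F hF
  exact (eventually_all_finite (finite_lt_nat (2 ^ n))).2 fun i hi =>
    (F.tendsto_muM_Pelt_ratio α hi S).eventually_mem (hU.mem_nhds (hF i hi))

/-- For all `n`, `m ≥ 1`, and every closed interval `I = [b₁,b₂] ⊆ [0,1]`
with rational endpoints, the set `A_{n,m,I}` is open in `(F_(C,β), d_α)`. -/
theorem stmt9 (C β α : ℝ) (hC : 1 < C) (hα : 0 ≤ α) (hαβ : α < β) (hβ : β < 1)
    (n m : ℕ) (hm : 1 ≤ m) (b₁ b₂ : ℚ)
    (hb₁ : 0 ≤ b₁) (hb : b₁ ≤ b₂) (hb₂ : b₂ ≤ 1) :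
    IsOpenWrt (fun F G : Fol C β => dalphaF α F G) (Aset C β n m (b₁ : ℝ) (b₂ : ℝ)) :=
  stmt9_general C β α n (Itilde b₁ b₂) (isOpen_Iio.union isOpen_Ioi)

end
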